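/- Let l, m ∈ ℕ be positive, let ν > 0, let A ∈ ℝ^{l×l} and B ∈ ℝ^{m×m} be symmetric positive definite matrices, and let S : ℝ^m → ℝ^l be a continuous map that is not affine-linear. Then there exist vectors y_d ∈ ℝ^l and u_d ∈ ℝ^m such that the problem of minimizing (1/2)(y − y_d)ᵀ A (y − y_d) + (ν/2)(u − u_d)ᵀ B (u − u_d) over (y,u) ∈ ℝ^l × ℝ^m subject to y = S(u) possesses more than one global solution. -/

import Mathlib

open Filter Topology
theorem cheb {H : Type*} [NormedAddCommGroup H] [InnerProductSpace ℝ H] [FiniteDimensional ℝ H]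
    (C : Set H) (hcl : IsClosed C)
    (hu : ∀ x p q, p ∈ C → q ∈ C → (∀ c ∈ C, ‖x - p‖ ≤ ‖x - c‖) → (∀ c ∈ C, ‖x - q‖ ≤ ‖x - c‖) → p = q)
    (a b : H) (ha : a ∈ C) (hb : b ∈ C) (s t : ℝ) (hs : 0 ≤ s) (ht : 0 ≤ t) (hst : s + t = 1) :
    s • a + t • b ∈ C := by
  have : ProperSpace H := FiniteDimensional.proper ℝ H
  have hne : C.Nonempty := ⟨a, ha⟩
  have hex : ∀ x : H, ∃ p, p ∈ C ∧ Metric.infDist x C = ‖x - p‖ := by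
    intro x
    obtain ⟨p, hp, h⟩ := hcl.exists_infDist_eq_dist hne x
    exact ⟨p, hp, by rw [h, dist_eq_norm]⟩
  choose P hPC hPd using hex
  have hPm : ∀ x, ∀ c ∈ C, ‖x - P x‖ ≤ ‖x - c‖ := by
    intro x c hc
    rw [← hPd, ← dist_eq_norm]
    exact Metric.infDist_le_dist_of_mem hc
  -- closedness + uniqueness give continuity of the projection
  have hPcont : Continuous P := by
    rw [continuous_iff_seqContinuous]
    intro w y hw
    apply tendsto_of_subseq_tendsto
    intro ns hns
    have hw' : Tendsto (fun n => w (ns n)) atTop (𝓝 y) := hw.comp hns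
    have hbd : Bornology.IsBounded (Set.range fun n => P (w (ns n))) := by
      obtain ⟨M, hM⟩ := (Metric.isBounded_range_of_tendsto _ hw').exists_norm_le
      rw [isBounded_iff_forall_norm_le]
      refine ⟨M + (M + ‖a‖), ?_⟩
      rintro _ ⟨n, rfl⟩
      have h1 := hM (w (ns n)) ⟨n, rfl⟩
      have h2 := hPm (w (ns n)) a ha
      have h3 := norm_sub_le (w (ns n)) a
      have h4 : ‖P (w (ns n))‖ ≤ ‖w (ns n)‖ + ‖w (ns n) - P (w (ns n))‖ := by
        have := norm_sub_le (w (ns n)) (w (ns n) - P (w (ns n)))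
        simpa using this
      simp only
      linarith
    obtain ⟨p, -, φ, hφ, hlim⟩ := tendsto_subseq_of_bounded hbd (fun n => Set.mem_range_self n)
    refine ⟨φ, ?_⟩
    have hpC : p ∈ C := hcl.mem_of_tendsto hlim (Eventually.of_forall fun n => hPC _)
    have hw2 : Tendsto (fun n => w (ns (φ n))) atTop (𝓝 y) := hw'.comp hφ.tendsto_atTop
    have : p = P y := by
      refine hu y p (P y) hpC (hPC y) ?_ (hPm y)
      intro c hc
      exact le_of_tendsto_of_tendsto' (hw2.sub hlim).norm (hw2.sub_const c).norm
        (fun n => hPm _ c hc)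
    rw [← this]
    exact hlim
  let f : H → ℝ := fun y => (‖y‖ ^ 2 - Metric.infDist y C ^ 2) / 2
  have hfc : Continuous f := by
    have := Metric.continuous_infDist_pt C
    fun_prop
  have hfP : ∀ y, f y = inner ℝ y (P y) - ‖P y‖ ^ 2 / 2 := by
    intro y
    simp only [f]
    rw [hPd, norm_sub_sq_real]; ring
  have hfle : ∀ y, ∀ c ∈ C, inner ℝ y c - ‖c‖ ^ 2 / 2 ≤ f y := by
    intro y c hc
    have h1 := hPm y c hc
    have h2 : ‖y - P y‖ ^ 2 ≤ ‖y - c‖ ^ 2 := by gcongr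
    simp only [f]
    rw [hPd]
    rw [norm_sub_sq_real y c] at h2
    linarith
  set x := s • a + t • b with hx
  obtain ⟨K, hK⟩ : ∃ K : ℝ, ∀ y, -K ≤ f y - inner ℝ y x := by
    refine ⟨s * (‖a‖ ^ 2 / 2) + t * (‖b‖ ^ 2 / 2), fun y => ?_⟩
    have h1 := mul_le_mul_of_nonneg_left (hfle y a ha) hs
    have h2 := mul_le_mul_of_nonneg_left (hfle y b hb) ht
    have h3 : f y = s * f y + t * f y := by rw [← add_mul, hst, one_mul]
    rw [hx, inner_add_right, inner_smul_right, inner_smul_right]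
    linarith
  -- perturbed minimizers
  have key : ∀ ε : ℝ, 0 < ε → ∃ y, P y - x + ε • y = 0 ∧ ε * ‖y‖ ^ 2 / 2 ≤ f 0 + K := by
    intro ε hε
    have hc : Continuous fun y : H => f y - inner ℝ y x + ε * ‖y‖ ^ 2 / 2 := by fun_prop
    have hlim : Tendsto (fun y : H => f y - inner ℝ y x + ε * ‖y‖ ^ 2 / 2) (cocompact H) atTop := by
      have h1 : Tendsto (fun y : H => -K + ε / 2 * ‖y‖ ^ 2) (cocompact H) atTop := by
        apply tendsto_atTop_add_const_left
        apply Tendsto.const_mul_atTop (by positivity)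
        exact (tendsto_pow_atTop two_ne_zero).comp (tendsto_norm_cocompact_atTop (E := H))
      refine tendsto_atTop_mono (fun y => ?_) h1
      have := hK y
      linarith
    obtain ⟨y, hy⟩ := hc.exists_forall_le hlim
    refine ⟨y, ?_, ?_⟩
    · set g := P y - x + ε • y with hg
      have hdir : ∀ τ : ℝ, 0 < τ →
          0 ≤ inner ℝ (-g) (P (y + τ • (-g)) - x + ε • y) + τ * (ε / 2 * ‖g‖ ^ 2) := by
        intro τ hτ
        have h1 := hy (y + τ • (-g))
        have h2 := hfle y _ (hPC (y + τ • (-g)))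
        have h3 := hfP (y + τ • (-g))
        have h4 := norm_add_sq_real y (τ • (-g))
        rw [h4, h3] at h1
        rw [inner_add_left, inner_add_left] at h1
        simp only [inner_smul_left, inner_smul_right, norm_smul, norm_neg, mul_pow,
          Real.norm_eq_abs, sq_abs, RCLike.conj_to_real] at h1
        rw [inner_add_right, inner_sub_right, inner_smul_right, real_inner_comm y (-g)]
        refine le_of_mul_le_mul_left ?_ hτ
        nlinarith
      have hcont : Continuous fun τ : ℝ =>
          (inner ℝ (-g) (P (y + τ • (-g)) - x + ε • y) + τ * (ε / 2 * ‖g‖ ^ 2) : ℝ) := by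
        fun_prop
      have h0 := ge_of_tendsto ((hcont.tendsto 0).mono_left nhdsWithin_le_nhds : Tendsto _ (𝓝[>] (0:ℝ)) _)
        (by filter_upwards [self_mem_nhdsWithin] with τ hτ using hdir τ hτ)
      simp only [zero_smul, add_zero, zero_mul, ← hg, inner_neg_left,
        real_inner_self_eq_norm_sq] at h0
      have : ‖g‖ ^ 2 = 0 := le_antisymm (by linarith) (sq_nonneg _)
      simpa using this
    · have h1 := hy 0
      have h2 := hK y
      simp at h1
      linarith
  rw [← hcl.closure_eq, Metric.mem_closure_iff]
  intro δ hδ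
  set M := f 0 + K
  have hM : 0 ≤ M := by
    obtain ⟨y, -, h⟩ := key 1 one_pos
    exact le_trans (by positivity) h
  obtain ⟨y, h1, h2⟩ := key (δ ^ 2 / (4 * (M + 1))) (by positivity)
  refine ⟨P y, hPC y, ?_⟩
  set ε := δ ^ 2 / (4 * (M + 1)) with hε
  have hεp : 0 < ε := by positivity
  have hεM : ε * (4 * (M + 1)) = δ ^ 2 := by rw [hε]; field_simp
  have h3 : x - P y = ε • y := by
    rw [eq_comm, ← sub_eq_zero, ← h1]; abel
  rw [dist_eq_norm, h3, norm_smul, Real.norm_of_nonneg hεp.le]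
  refine lt_of_pow_lt_pow_left₀ 2 hδ.le ?_
  nlinarith

theorem contSymm {E H : Type*} [NormedAddCommGroup E] [NormedSpace ℝ E]
    [NormedAddCommGroup H] [NormedSpace ℝ H] [FiniteDimensional ℝ E] (T : E ≃ₗ[ℝ] H) :
    Continuous T.symm := by
  have : FiniteDimensional ℝ H := T.finiteDimensional
  exact LinearMap.continuous_of_finiteDimensional T.symm.toLinearMap

open Matrix in
open scoped MatrixOrder Matrix.Norms.L2Operator in
theorem fac {n : ℕ} (A : Matrix (Fin n) (Fin n) ℝ) (hA : A.PosDef) :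
    ∃ T : (Fin n → ℝ) ≃ₗ[ℝ] EuclideanSpace ℝ (Fin n), ∀ v, ‖T v‖ ^ 2 = v ⬝ᵥ A.mulVec v := by
  obtain ⟨R, hR⟩ := CStarAlgebra.nonneg_iff_eq_star_mul_self.mp hA.posSemidef.nonneg
  let T : (Fin n → ℝ) →ₗ[ℝ] EuclideanSpace ℝ (Fin n) :=
    (WithLp.linearEquiv 2 ℝ (Fin n → ℝ)).symm.toLinearMap ∘ₗ R.mulVecLin
  have hT : ∀ v, ‖T v‖ ^ 2 = v ⬝ᵥ A.mulVec v := by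
    intro v
    rw [EuclideanSpace.real_norm_sq_eq, hR, Matrix.star_eq_conjTranspose, ← Matrix.mulVec_mulVec, Matrix.dotProduct_mulVec,
      Matrix.conjTranspose_eq_transpose_of_trivial, Matrix.vecMul_transpose]
    simp [T, dotProduct, sq]
  have hinj : Function.Injective T := by
    rw [injective_iff_map_eq_zero]
    intro v hv
    by_contra h
    have h1 := hA.dotProduct_mulVec_pos h
    have h2 := hT v
    rw [hv] at h2
    simp at h1 h2
    linarith
  exact ⟨LinearEquiv.ofInjectiveOfFinrankEq T hinj (by simp), fun v => hT v⟩

open Matrix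
theorem finite_dimensional_tracking_nonuniqueness
    (l m : ℕ) (hl : 0 < l) (hm : 0 < m) (ν : ℝ) (hν : 0 < ν)
    (A : Matrix (Fin l) (Fin l) ℝ) (B : Matrix (Fin m) (Fin m) ℝ)
    (hA : A.PosDef) (hB : B.PosDef)
    (S : (Fin m → ℝ) → (Fin l → ℝ)) (hScont : Continuous S)
    (hSna : ¬ ∃ L : (Fin m → ℝ) →ₗ[ℝ] (Fin l → ℝ), ∀ u, S u = L u + S 0) :
    ∃ (yd : Fin l → ℝ) (ud : Fin m → ℝ)
      (s₁ s₂ : (Fin l → ℝ) × (Fin m → ℝ)), s₁ ≠ s₂ ∧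
      (s₁.1 = S s₁.2 ∧ ∀ u : Fin m → ℝ,
        (1 / 2) * ((s₁.1 - yd) ⬝ᵥ A.mulVec (s₁.1 - yd)) +
            (ν / 2) * ((s₁.2 - ud) ⬝ᵥ B.mulVec (s₁.2 - ud)) ≤
          (1 / 2) * ((S u - yd) ⬝ᵥ A.mulVec (S u - yd)) +
            (ν / 2) * ((u - ud) ⬝ᵥ B.mulVec (u - ud))) ∧
      (s₂.1 = S s₂.2 ∧ ∀ u : Fin m → ℝ,
        (1 / 2) * ((s₂.1 - yd) ⬝ᵥ A.mulVec (s₂.1 - yd)) +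
            (ν / 2) * ((s₂.2 - ud) ⬝ᵥ B.mulVec (s₂.2 - ud)) ≤
          (1 / 2) * ((S u - yd) ⬝ᵥ A.mulVec (S u - yd)) +
            (ν / 2) * ((u - ud) ⬝ᵥ B.mulVec (u - ud))) := by

  by_contra hcon
  obtain ⟨TA, hTA⟩ := fac A hA
  obtain ⟨TB, hTB⟩ := fac (ν • B) (hB.smul hν)
  obtain ⟨T, hT⟩ : ∃ T : ((Fin l → ℝ) × (Fin m → ℝ)) ≃ₗ[ℝ]
      WithLp 2 (EuclideanSpace ℝ (Fin l) × EuclideanSpace ℝ (Fin m)),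
      ∀ z, ‖T z‖ ^ 2 = z.1 ⬝ᵥ A.mulVec z.1 + ν * (z.2 ⬝ᵥ B.mulVec z.2) := by
    refine ⟨(TA.prodCongr TB).trans (WithLp.linearEquiv 2 ℝ _).symm, fun z => ?_⟩
    rw [WithLp.prod_norm_sq_eq_of_L2]
    have h1 := hTA z.1
    have h2 := hTB z.2
    rw [Matrix.smul_mulVec, dotProduct_smul, smul_eq_mul] at h2
    rw [← h1, ← h2]
    rfl
  let C := T.symm ⁻¹' {z | z.1 = S z.2}
  have hcl : IsClosed C := by
    exact (isClosed_eq continuous_fst (hScont.comp continuous_snd)).preimage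
      (contSymm T)
  have hmem : ∀ u, T (S u, u) ∈ C := by
    intro u
    simp [C]
  have conv := cheb C hcl (by
    intro x p q hp hq h1 h2
    by_contra hne
    apply hcon
    refine ⟨(T.symm x).1, (T.symm x).2, T.symm p, T.symm q, fun h => hne (T.symm.injective h),
      ⟨hp, ?_⟩, ⟨hq, ?_⟩⟩
    · intro u
      have h3 := pow_le_pow_left₀ (norm_nonneg _) (h1 _ (hmem u)) 2
      have e1 := hT (T.symm p - T.symm x)
      have e2 := hT ((S u, u) - T.symm x)
      rw [map_sub, T.apply_symm_apply, norm_sub_rev] at e1 e2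
      rw [T.apply_symm_apply] at e1
      rw [e1, e2] at h3
      simp only [Prod.fst_sub, Prod.snd_sub] at h3
      linarith
    · intro u
      have h3 := pow_le_pow_left₀ (norm_nonneg _) (h2 _ (hmem u)) 2
      have e1 := hT (T.symm q - T.symm x)
      have e2 := hT ((S u, u) - T.symm x)
      rw [map_sub, T.apply_symm_apply, norm_sub_rev] at e1 e2
      rw [T.apply_symm_apply] at e1
      rw [e1, e2] at h3
      simp only [Prod.fst_sub, Prod.snd_sub] at h3
      linarith)
  have hS : ∀ (a b : Fin m → ℝ) (s t : ℝ), 0 ≤ s → 0 ≤ t → s + t = 1 →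
      S (s • a + t • b) = s • S a + t • S b := by
    intro a b s t hs ht hst
    have h := conv _ _ (hmem a) (hmem b) s t hs ht hst
    have h2 : s • S a + t • S b = S (s • a + t • b) := by simpa [C] using h
    exact h2.symm
  have hadd0 : ∀ a b, S (a + b) + S 0 = S a + S b := by
    intro a b
    have h1 := hS a b (1/2) (1/2) (by norm_num) (by norm_num) (by norm_num)
    have h2 := hS (a + b) 0 (1/2) (1/2) (by norm_num) (by norm_num) (by norm_num)
    rw [smul_zero, add_zero, smul_add, h1, ← smul_add, ← smul_add] at h2
    exact (smul_right_injective _ (by norm_num : (1/2 : ℝ) ≠ 0) h2).symm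
  let G : (Fin m → ℝ) →+ (Fin l → ℝ) :=
    { toFun := fun u => S u - S 0
      map_zero' := sub_self _
      map_add' := fun a b => by
        have := hadd0 a b
        rw [← eq_sub_iff_add_eq] at this
        rw [this]; abel }
  have hG : Continuous G := hScont.sub continuous_const
  exact hSna ⟨(G.toRealLinearMap hG).toLinearMap, fun u => by simp [G]⟩
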